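/- arXiv:1304.8016 — 4 statements merged into one kernel-verified Lean document; each statement's English description precedes it below -/
import Mathlib

section
/- For every n ≥ 3 and every list of n boxes B_1, …, B_n with arbitrary prescribed positive widths and heights, there exists a representation of the boxes in which B_i touches B_{i+1} for every i = 1, …, n−1 and B_n touches B_1; that is, every n-cycle on n boxes is realizable. -/
/-!
Lay the boxes out along the horizontal line `y = 0`: boxes `0, …, m - 1` stand on the line from left
to right, starting at `x = 0`, and boxes `m, …, n - 1` hang below it from right to left, so that
box `n - 1` is the leftmost of the lower row, starting at `x = d`. Consecutive boxes of one row share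
part of a vertical side, so only the two pairs `(m - 1, m)` and `(n - 1, 0)` at the ends of the
rows are in question; these have to overlap in a horizontal segment on the line.

Write `S k` for the total width of the first `k` boxes. Choosing `m` minimal with
`S n < S m + S (m + 1)` balances the two rows: minimality gives `S (m - 1) + S m ≤ S n`, and
these two inequalities say exactly that boxes `m - 1` and `m` overlap for every sufficiently
small shift `d > 0`. A strictly positive shift is needed because the second inequality is not
strict. The pair `(n - 1, 0)` overlaps as soon as `0 < d < w 0`.
-/

open Set

/-- The closed axis-aligned box with bottom-left corner `pos`, width `w` and height `h`. -/
def pBox (pos : ℝ × ℝ) (w h : ℝ) : Set (ℝ × ℝ) :=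
  Icc pos.1 (pos.1 + w) ×ˢ Icc pos.2 (pos.2 + h)

/-- The open interior of the axis-aligned box. -/
def pBoxInt (pos : ℝ × ℝ) (w h : ℝ) : Set (ℝ × ℝ) :=
  Ioo pos.1 (pos.1 + w) ×ˢ Ioo pos.2 (pos.2 + h)

/-- Two placed boxes touch if their intersection is a line segment of positive
length, i.e. the segment between two distinct points. -/
def Touches (A B : Set (ℝ × ℝ)) : Prop :=
  ∃ p q : ℝ × ℝ, p ≠ q ∧ A ∩ B = segment ℝ p q

/-- A representation of boxes with prescribed widths `w` and heights `h`:
a choice of positions such that the open interiors are pairwise disjoint. -/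
def IsRepresentation {ι : Type*} (w h : ι → ℝ) (pos : ι → ℝ × ℝ) : Prop :=
  Pairwise fun i j => Disjoint (pBoxInt (pos i) (w i) (h i)) (pBoxInt (pos j) (w j) (h j))

/-- Boxes sharing (part of) a vertical side touch. -/
lemma touches_of_vertical {p q : ℝ × ℝ} {w h w' h' : ℝ} (hw : 0 < w) (hw' : 0 < w')
    (hh : 0 < h) (hh' : 0 < h') (hx : q.1 = p.1 + w)
    (h1 : p.2 < q.2 + h') (h2 : q.2 < p.2 + h) :
    Touches (pBox p w h) (pBox q w' h') := by
  have hlt : max p.2 q.2 < min (p.2 + h) (q.2 + h') := by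
    simp only [max_lt_iff, lt_min_iff]
    refine ⟨⟨?_, ?_⟩, ?_, ?_⟩ <;> linarith
  refine ⟨(q.1, max p.2 q.2), (q.1, min (p.2 + h) (q.2 + h')), ?_, ?_⟩
  · intro e
    exact hlt.ne (congrArg Prod.snd e)
  · rw [← Prod.image_mk_segment_right, segment_eq_Icc hlt.le]
    ext ⟨x, y⟩
    simp only [pBox, mem_inter_iff, mem_prod, mem_Icc, mem_image, Prod.mk.injEq, max_le_iff,
      le_min_iff]
    constructor
    · rintro ⟨⟨⟨a, b⟩, c, d⟩, ⟨e, f⟩, g, k⟩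
      exact ⟨y, ⟨⟨c, g⟩, d, k⟩, by linarith, rfl⟩
    · rintro ⟨y', ⟨⟨c, g⟩, d, k⟩, rfl, rfl⟩
      refine ⟨⟨⟨?_, ?_⟩, c, d⟩, ⟨?_, ?_⟩, g, k⟩ <;> linarith

/-- Boxes sharing (part of) a horizontal side touch. -/
lemma touches_of_horizontal {p q : ℝ × ℝ} {w h w' h' : ℝ} (hw : 0 < w) (hw' : 0 < w')
    (hh : 0 < h) (hh' : 0 < h') (hy : q.2 = p.2 + h)
    (h1 : p.1 < q.1 + w') (h2 : q.1 < p.1 + w) :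
    Touches (pBox p w h) (pBox q w' h') := by
  have hlt : max p.1 q.1 < min (p.1 + w) (q.1 + w') := by
    simp only [max_lt_iff, lt_min_iff]
    refine ⟨⟨?_, ?_⟩, ?_, ?_⟩ <;> linarith
  refine ⟨(max p.1 q.1, q.2), (min (p.1 + w) (q.1 + w'), q.2), ?_, ?_⟩
  · intro e
    exact hlt.ne (congrArg Prod.fst e)
  · rw [← Prod.image_mk_segment_left, segment_eq_Icc hlt.le]
    ext ⟨x, y⟩
    simp only [pBox, mem_inter_iff, mem_prod, mem_Icc, mem_image, Prod.mk.injEq, max_le_iff,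
      le_min_iff]
    constructor
    · rintro ⟨⟨⟨a, b⟩, c, d⟩, ⟨e, f⟩, g, k⟩
      exact ⟨x, ⟨⟨a, e⟩, b, f⟩, rfl, by linarith⟩
    · rintro ⟨x', ⟨⟨a, e⟩, b, f⟩, rfl, rfl⟩
      refine ⟨⟨⟨a, b⟩, ?_, ?_⟩, ⟨e, f⟩, ?_, ?_⟩ <;> linarith

lemma touches_symm {A B : Set (ℝ × ℝ)} (hAB : Touches A B) : Touches B A := by
  obtain ⟨p, q, hne, e⟩ := hAB
  exact ⟨p, q, hne, by rw [inter_comm, e]⟩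

lemma disjoint_of_left {p q : ℝ × ℝ} {w h w' h' : ℝ} (hx : p.1 + w ≤ q.1) :
    Disjoint (pBoxInt p w h) (pBoxInt q w' h') := by
  rw [Set.disjoint_left]
  rintro ⟨x, y⟩ ⟨⟨_, a⟩, _⟩ ⟨⟨b, _⟩, _⟩
  exact absurd (a.trans_le hx) (not_lt.2 b.le)

lemma disjoint_of_below {p q : ℝ × ℝ} {w h w' h' : ℝ} (hy : p.2 + h ≤ q.2) :
    Disjoint (pBoxInt p w h) (pBoxInt q w' h') := by
  rw [Set.disjoint_left]
  rintro ⟨x, y⟩ ⟨_, _, a⟩ ⟨_, b, _⟩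
  exact absurd (a.trans_le hy) (not_lt.2 b.le)

/-- Lemma 1 (cycles): for every `n ≥ 3` and every list of `n` boxes with positive
widths and heights there is a representation realizing the `n`-cycle. -/
theorem cycle_realizable (n : ℕ) [NeZero n] (hn : 3 ≤ n) (w h : Fin n → ℝ)
    (hw : ∀ i, 0 < w i) (hh : ∀ i, 0 < h i) :
    ∃ pos : Fin n → ℝ × ℝ, IsRepresentation w h pos ∧
      ∀ i : Fin n,
        Touches (pBox (pos i) (w i) (h i))
          (pBox (pos (i + 1)) (w (i + 1)) (h (i + 1))) := by
  obtain ⟨S, S0, Ssucc, Smono⟩ : ∃ S : ℕ → ℝ, S 0 = 0 ∧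
      (∀ i : Fin n, S (i + 1) = S i + w i) ∧ Monotone S := by
    refine ⟨fun m => ∑ j ∈ Finset.range m, if hj : j < n then w ⟨j, hj⟩ else 0, by simp, ?_, ?_⟩
    · intro i
      simp [Finset.sum_range_succ]
    · refine monotone_nat_of_le_succ fun m => ?_
      rw [Finset.sum_range_succ]
      split_ifs with hj
      · linarith [hw ⟨m, hj⟩]
      · simp
  have hS1 := Ssucc ⟨0, by omega⟩
  have hw0 := hw ⟨0, by omega⟩
  simp only [S0, zero_add] at hS1
  have hlast : S n < S (n - 1) + S (n - 1 + 1) := by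
    have : S 1 ≤ S (n - 1) := Smono (by omega)
    rw [show n - 1 + 1 = n by omega]
    linarith
  have hex : ∃ m, S n < S m + S (m + 1) := ⟨n - 1, hlast⟩
  obtain ⟨m, hm, hmin⟩ : ∃ m, S n < S m + S (m + 1) ∧ ∀ k < m, S k + S (k + 1) ≤ S n := by
    classical
    exact ⟨Nat.find hex, Nat.find_spec hex, fun k hk => not_lt.1 (Nat.find_min hex hk)⟩
  have hm1 : 1 ≤ m := by
    by_contra hlt
    obtain rfl : m = 0 := by omega
    have : S 1 ≤ S n := Smono (by omega)
    simp only [S0, zero_add] at hm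
    linarith
  have hmn : m < n := by
    by_contra hlt
    linarith [hmin (n - 1) (by omega)]
  -- the shift: small enough for both end pairs to overlap
  obtain ⟨d, hd0, hd⟩ := exists_between (lt_min hw0 (sub_pos.2 hm))
  obtain ⟨hdw, hdm⟩ := lt_min_iff.1 hd
  let pos : Fin n → ℝ × ℝ := fun i =>
    if (i : ℕ) < m then (S i, 0) else (d + S n - S (i + 1), - h i)
  have ptop : ∀ i : Fin n, (i : ℕ) < m → pos i = (S i, 0) := fun i hi => if_pos hi
  have pbot : ∀ i : Fin n, ¬ (i : ℕ) < m → pos i = (d + S n - S (i + 1), - h i) :=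
    fun i hi => if_neg hi
  refine ⟨pos, ?_, ?_⟩
  -- disjointness is symmetric, so assume `i < j`
  · have key : ∀ i j : Fin n, (i : ℕ) < j →
        Disjoint (pBoxInt (pos i) (w i) (h i)) (pBoxInt (pos j) (w j) (h j)) := by
      intro i j hij
      have hS : S (i + 1) ≤ S j := Smono hij
      by_cases hj : (j : ℕ) < m
      · apply disjoint_of_left
        rw [ptop i (hij.trans hj), ptop j hj]
        simpa [← Ssucc i] using hS
      · by_cases hi : (i : ℕ) < m
        · apply Disjoint.symm
          apply disjoint_of_below
          rw [ptop i hi, pbot j hj]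
          simp
        · apply Disjoint.symm
          apply disjoint_of_left
          rw [pbot i hi, pbot j hj]
          have := Ssucc j
          dsimp only
          linarith
    intro i j hij
    rcases lt_or_gt_of_ne (Fin.val_ne_of_ne hij) with hlt | hlt
    · exact key i j hlt
    · exact (key j i hlt).symm
  · intro i
    by_cases hi : (i : ℕ) + 1 < n
    · have hv : ((i + 1 : Fin n) : ℕ) = i + 1 := by
        rw [Fin.val_add, Fin.val_one', Nat.mod_eq_of_lt (show 1 < n by omega),
          Nat.mod_eq_of_lt hi]
      generalize (i + 1 : Fin n) = j at hv
      have hSi := Ssucc i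
      have hSj := Ssucc j
      have a1 := hw i
      have a2 := hh i
      have a3 := hw j
      have a4 := hh j
      rw [hv] at hSj
      by_cases hj : (j : ℕ) < m
      · apply touches_of_vertical a1 a3 a2 a4 <;> rw [ptop i (by omega), ptop j hj] <;>
          dsimp only <;> (try rw [hv]) <;> linarith
      · by_cases hi' : (i : ℕ) < m
        -- the right ends of the two rows, where the choice of `m` is used
        · have him : m = i + 1 := by omega
          have hmin' := hmin i (by omega)
          subst him
          apply touches_symm
          apply touches_of_horizontal a3 a1 a4 a2 <;> rw [ptop i hi', pbot j hj] <;>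
            dsimp only <;> (try rw [hv]) <;> linarith
        · apply touches_symm
          apply touches_of_vertical a3 a1 a4 a2 <;> rw [pbot i hi', pbot j hj] <;>
            dsimp only <;> (try rw [hv]) <;> linarith
    · have hin : (i : ℕ) + 1 = n := by omega
      have hv : (i + 1 : Fin n) = ⟨0, by omega⟩ := by
        apply Fin.ext
        rw [Fin.val_add, Fin.val_one', Nat.mod_eq_of_lt (show 1 < n by omega), hin]
        simp
      rw [hv]
      have a1 := hw i
      apply touches_of_horizontal a1 hw0 (hh i) (hh _) <;>
        rw [pbot i (by omega), ptop ⟨0, by omega⟩ hm1] <;> dsimp only <;>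
        (try rw [hin]) <;> (try rw [S0]) <;> linarith
end

section
/- Let B_1, …, B_n be boxes with prescribed positive widths and heights, and let G be a graph on {1, …, n} that is a disjoint union of cycles, each of length at least 3. Then there exists a representation of the boxes in which, for every edge {i, j} of G, the boxes B_i and B_j touch. -/
/-!
A single cycle `b₀, …, b_{m-1}` with `m ≥ 2` is realized by two rows of boxes along the line
`y = 0`. For a suitable `k`, the boxes `b₀, …, b_k` stand on the line, packed from left to right
starting at `x = 0`, and `b_{m-1}, …, b_{k+1}` hang below the line, packed from left to right
starting at `x = -ε`. Consecutive boxes of one row share a vertical segment ending on the line,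
and `b_{m-1}`, `b₀` share a horizontal segment as soon as `ε < w_{m-1}`.

Write `S l = w₀ + ⋯ + w_{l-1}` and `T = S m`. The boxes `b_k` and `b_{k+1}` at the right ends of
the rows share a horizontal segment iff `S k + S (k+1) + ε < T < S (k+1) + S (k+2) + ε`. Since
`S l + S (l+1)` is less than `T` at `l = 0` and greater than `T` at `l = m - 1`, some
`k ≤ m - 2` satisfies `S k + S (k+1) < T ≤ S (k+1) + S (k+2)`, and any small `ε > 0` then works
(`exists_cycle_layout`).

In a general permutation, every orbit is enumerated from a chosen representative and laid out in
this way. There are finitely many boxes, so all layouts lie in one bounded vertical strip, and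
translating the orbits horizontally by distinct multiples of its width separates them.
-/

open Set

/-- `G` is a disjoint union of cycles, each of length at least `3`:
there is a permutation `σ` without `2`-cycles whose nontrivial orbits (which all have
length at least `3`) trace out exactly the edges of `G`. -/
def IsDisjointUnionOfCycles {n : ℕ} (G : SimpleGraph (Fin n)) : Prop :=
  ∃ σ : Equiv.Perm (Fin n),
    (∀ v, σ v ≠ v → σ (σ v) ≠ v) ∧
    ∀ u v, G.Adj u v ↔ u ≠ v ∧ (σ u = v ∨ σ v = u)

/-! ### Contact and disjointness of two boxes -/

theorem disjoint_pBoxInt_of_right {p q : ℝ × ℝ} {w h w' h' : ℝ} (H : p.1 + w ≤ q.1) :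
    Disjoint (pBoxInt p w h) (pBoxInt q w' h') := by
  rw [Set.disjoint_left]
  rintro z ⟨hz, -⟩ ⟨hz', -⟩
  have h1 := hz.2
  have h2 := hz'.1
  linarith

theorem disjoint_pBoxInt_of_above {p q : ℝ × ℝ} {w h w' h' : ℝ} (H : p.2 + h ≤ q.2) :
    Disjoint (pBoxInt p w h) (pBoxInt q w' h') := by
  rw [Set.disjoint_left]
  rintro z ⟨-, hz⟩ ⟨-, hz'⟩
  have h1 := hz.2
  have h2 := hz'.1
  linarith

theorem Touches.symm {A B : Set (ℝ × ℝ)} (H : Touches A B) : Touches B A := by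
  obtain ⟨p, q, hpq, h⟩ := H
  exact ⟨p, q, hpq, by rw [Set.inter_comm, h]⟩

/-- Boxes abutting along a vertical line touch if their vertical extents overlap. -/
theorem touches_of_right {p q : ℝ × ℝ} {w h w' h' : ℝ} (hw : 0 < w) (hw' : 0 < w')
    (hx : p.1 + w = q.1) (H : max p.2 q.2 < min (p.2 + h) (q.2 + h')) :
    Touches (pBox p w h) (pBox q w' h') := by
  refine ⟨(q.1, max p.2 q.2), (q.1, min (p.2 + h) (q.2 + h')), ?_, ?_⟩
  · intro e
    exact H.ne (congrArg Prod.snd e)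
  · rw [← Prod.image_mk_segment_right, segment_eq_Icc H.le]
    ext ⟨a, b⟩
    simp only [pBox, Set.mem_inter_iff, Set.mem_prod, Set.mem_Icc, Set.mem_image, Prod.mk.injEq,
      max_le_iff, le_min_iff]
    constructor
    · rintro ⟨⟨⟨_, _⟩, _, _⟩, ⟨_, _⟩, _, _⟩
      exact ⟨b, ⟨⟨by assumption, by assumption⟩, by assumption, by assumption⟩,
        by linarith, rfl⟩
    · rintro ⟨c, ⟨⟨_, _⟩, _, _⟩, rfl, rfl⟩
      refine ⟨⟨⟨?_, ?_⟩, ?_, ?_⟩, ⟨?_, ?_⟩, ?_, ?_⟩ <;> linarith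

/-- Boxes abutting along a horizontal line touch if their horizontal extents overlap. -/
theorem touches_of_above {p q : ℝ × ℝ} {w h w' h' : ℝ} (hh : 0 < h) (hh' : 0 < h')
    (hy : p.2 + h = q.2) (H : max p.1 q.1 < min (p.1 + w) (q.1 + w')) :
    Touches (pBox p w h) (pBox q w' h') := by
  refine ⟨(max p.1 q.1, q.2), (min (p.1 + w) (q.1 + w'), q.2), ?_, ?_⟩
  · intro e
    exact H.ne (congrArg Prod.fst e)
  · rw [← Prod.image_mk_segment_left, segment_eq_Icc H.le]
    ext ⟨a, b⟩
    simp only [pBox, Set.mem_inter_iff, Set.mem_prod, Set.mem_Icc, Set.mem_image, Prod.mk.injEq,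
      max_le_iff, le_min_iff]
    constructor
    · rintro ⟨⟨⟨_, _⟩, _, _⟩, ⟨_, _⟩, _, _⟩
      exact ⟨a, ⟨⟨by assumption, by assumption⟩, by assumption, by assumption⟩,
        rfl, by linarith⟩
    · rintro ⟨c, ⟨⟨_, _⟩, _, _⟩, rfl, rfl⟩
      refine ⟨⟨⟨?_, ?_⟩, ?_, ?_⟩, ⟨?_, ?_⟩, ?_, ?_⟩ <;> linarith

theorem pBox_translate_touches {p q : ℝ × ℝ} {w h w' h' : ℝ} (t : ℝ)
    (H : Touches (pBox p w h) (pBox q w' h')) :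
    Touches (pBox (p.1 + t, p.2) w h) (pBox (q.1 + t, q.2) w' h') := by
  obtain ⟨a, b, hab, e⟩ := H
  refine ⟨(t, 0) + a, (t, 0) + b, fun h => hab (add_left_cancel h), ?_⟩
  rw [← segment_translate_image, ← e]
  ext ⟨x, y⟩
  simp only [pBox, Set.image_add_left, Set.mem_preimage, Set.mem_inter_iff, Set.mem_prod,
    Set.mem_Icc, Prod.fst_add, Prod.snd_add, Prod.fst_neg, Prod.snd_neg]
  constructor
  · rintro ⟨⟨⟨_, _⟩, _, _⟩, ⟨_, _⟩, _, _⟩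
    refine ⟨⟨⟨?_, ?_⟩, ?_, ?_⟩, ⟨?_, ?_⟩, ?_, ?_⟩ <;> linarith
  · rintro ⟨⟨⟨_, _⟩, _, _⟩, ⟨_, _⟩, _, _⟩
    refine ⟨⟨⟨?_, ?_⟩, ?_, ?_⟩, ⟨?_, ?_⟩, ?_, ?_⟩ <;> linarith

theorem pBoxInt_translate_disjoint {p q : ℝ × ℝ} {w h w' h' : ℝ} (t : ℝ)
    (H : Disjoint (pBoxInt p w h) (pBoxInt q w' h')) :
    Disjoint (pBoxInt (p.1 + t, p.2) w h) (pBoxInt (q.1 + t, q.2) w' h') := by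
  rw [Set.disjoint_left] at H ⊢
  rintro ⟨x, y⟩ ⟨⟨h1, h2⟩, h3⟩ ⟨⟨h4, h5⟩, h6⟩
  dsimp only at *
  exact H (a := (x - t, y)) ⟨⟨by dsimp only; linarith, by dsimp only; linarith⟩, h3⟩
    ⟨⟨by dsimp only; linarith, by dsimp only; linarith⟩, h6⟩

/-! ### Layout of a single cycle -/

/-- The two-row layout of a single cycle `0, 1, …, m - 1`. -/
theorem exists_cycle_layout (m : ℕ) (w h : ℕ → ℝ) (hw : ∀ i, 0 < w i) (hh : ∀ i, 0 < h i) :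
    ∃ pos : ℕ → ℝ × ℝ,
      (∀ i j, i < j → j < m →
        Disjoint (pBoxInt (pos i) (w i) (h i)) (pBoxInt (pos j) (w j) (h j))) ∧
      (∀ i, i + 1 < m →
        Touches (pBox (pos i) (w i) (h i)) (pBox (pos (i + 1)) (w (i + 1)) (h (i + 1)))) ∧
      (2 ≤ m →
        Touches (pBox (pos (m - 1)) (w (m - 1)) (h (m - 1))) (pBox (pos 0) (w 0) (h 0))) := by
  rcases Nat.lt_or_ge m 2 with hm | hm
  · exact ⟨fun _ => 0, fun i j _ _ => by omega, fun i _ => by omega, fun _ => by omega⟩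
  obtain ⟨S, hS0, hS⟩ : ∃ S : ℕ → ℝ, S 0 = 0 ∧ ∀ l, S (l + 1) = S l + w l :=
    ⟨fun l => ∑ i ∈ Finset.range l, w i, by simp, fun l => Finset.sum_range_succ _ _⟩
  have hmono : StrictMono S := strictMono_nat_of_lt_succ fun l => by
    have := hw l
    rw [hS]; linarith
  obtain ⟨k, hkm, hk1, hk2⟩ : ∃ k, k + 1 < m ∧ S k + S (k + 1) < S m ∧
      S m ≤ S (k + 1) + S (k + 2) := by
    classical
    have hex : ∃ l, S m ≤ S l + S (l + 1) := by
      refine ⟨m - 1, ?_⟩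
      have h1 : S 0 < S (m - 1) := hmono (by omega)
      rw [show m - 1 + 1 = m by omega]
      linarith
    have hle : Nat.find hex ≤ m - 1 := by
      refine Nat.find_min' hex ?_
      have h1 : S 0 < S (m - 1) := hmono (by omega)
      rw [show m - 1 + 1 = m by omega]
      linarith
    have hpos : Nat.find hex ≠ 0 := by
      intro h0
      have h1 := Nat.find_spec hex
      rw [h0] at h1
      have h2 : S (0 + 1) < S m := hmono (by omega)
      linarith
    obtain ⟨k, hk⟩ := Nat.exists_eq_succ_of_ne_zero hpos
    refine ⟨k, by omega, ?_, ?_⟩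
    · exact not_le.mp (Nat.find_min hex (m := k) (by omega))
    · have h1 := Nat.find_spec hex
      rw [hk] at h1
      exact h1
  obtain ⟨ε, hε0, hε⟩ := exists_between
    (lt_min (hw (m - 1)) (sub_pos.mpr hk1))
  obtain ⟨hε1, hε2⟩ := lt_min_iff.mp hε
  have hSm : S m = S (m - 1) + w (m - 1) := by
    rw [← hS, show m - 1 + 1 = m by omega]
  refine ⟨fun l => if l ≤ k then (S l, 0) else (S m - S (l + 1) - ε, -h l), ?_, ?_, ?_⟩
  · intro i j hij hjm
    have hSij : S (i + 1) ≤ S j := hmono.monotone hij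
    by_cases hj : j ≤ k
    · have hi : i ≤ k := by omega
      simp only [hi, hj, if_true]
      apply disjoint_pBoxInt_of_right
      dsimp only
      rw [← hS]; exact hSij
    · by_cases hi : i ≤ k
      · simp only [hi, hj, if_true, if_false]
        apply Disjoint.symm
        apply disjoint_pBoxInt_of_above
        simp
      · simp only [hi, hj, if_false]
        apply Disjoint.symm
        apply disjoint_pBoxInt_of_right
        have := hS j
        dsimp only
        linarith
  · intro i him
    have hwi := hw i
    have hhi := hh i
    have hwi' := hw (i + 1)
    have hhi' := hh (i + 1)
    rcases lt_trichotomy i k with hik | rfl | hik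
    · have h1 : i ≤ k := hik.le
      have h2 : i + 1 ≤ k := hik
      simp only [h1, h2, if_true]
      exact touches_of_right hwi hwi' (hS i).symm (by simp [hhi, hhi'])
    · have h2 : ¬ (i + 1 ≤ i) := by omega
      simp only [le_refl, h2, if_true, if_false]
      apply Touches.symm
      apply touches_of_above hhi' hhi
      · simp
      · have e1 := hS i
        have e2 := hS (i + 1)
        rw [show i + 1 + 1 = i + 2 from rfl] at *
        dsimp only
        rw [max_lt_iff, lt_min_iff, lt_min_iff]
        refine ⟨⟨?_, ?_⟩, ?_, ?_⟩ <;> linarith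
    · have h1 : ¬ i ≤ k := by omega
      have h2 : ¬ i + 1 ≤ k := by omega
      simp only [h1, h2, if_false]
      apply Touches.symm
      apply touches_of_right hwi' hwi
      · have e2 := hS (i + 1)
        dsimp only
        linarith
      · simp [hhi, hhi']
  · intro _
    have h1 : ¬ m - 1 ≤ k := by omega
    simp only [h1, if_false, Nat.zero_le, if_true, hS0]
    apply touches_of_above (hh _) (hh _)
    · simp
    · have := hw 0
      have := hw (m - 1)
      rw [show m - 1 + 1 = m by omega]
      dsimp only
      rw [max_lt_iff, lt_min_iff, lt_min_iff]
      refine ⟨⟨?_, ?_⟩, ?_, ?_⟩ <;> linarith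

/-! ### Combining the orbits -/

/-- Every orbit of a permutation of `Fin n` is enumerated, without repetition, as
`rep, σ rep, …, σ^[p - 1] rep` with `p` the period; `idx` is the position of a point in it. -/
theorem exists_orbit_enumeration {n : ℕ} (σ : Equiv.Perm (Fin n)) :
    ∃ (rep : Fin n → Fin n) (idx : Fin n → ℕ),
      (∀ i, σ^[idx i] (rep i) = i) ∧
      (∀ i, idx i < Function.minimalPeriod σ (rep i)) ∧
      (∀ i, rep (σ i) = rep i) := by
  let s := Equiv.Perm.SameCycle.setoid σ
  have key : ∀ i, ∃ l, σ^[l] (Quotient.out (Quotient.mk s i)) = i ∧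
      l < Function.minimalPeriod σ (Quotient.out (Quotient.mk s i)) := by
    intro i
    have h1 : σ.SameCycle (Quotient.out (Quotient.mk s i)) i := Quotient.mk_out (s := s) i
    obtain ⟨l, hl⟩ := h1.exists_nat_pow_eq
    refine ⟨l % Function.minimalPeriod σ (Quotient.out (Quotient.mk s i)), ?_, ?_⟩
    · rw [Function.iterate_mod_minimalPeriod_eq, ← Equiv.Perm.coe_pow, hl]
    · apply Nat.mod_lt
      exact Function.minimalPeriod_pos_of_mem_periodicPts (σ.injective.mem_periodicPts _)
  choose idx h1 h2 using key
  refine ⟨fun i => Quotient.out (Quotient.mk s i), idx, h1, h2, fun i => ?_⟩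
  have : Quotient.mk s (σ i) = Quotient.mk s i :=
    Quotient.sound (s := s) (Equiv.Perm.sameCycle_apply_left.mpr (Equiv.Perm.SameCycle.refl σ i))
  simp only [this]

/-- If `G` is a disjoint union of cycles of length at least `3`, then any boxes with
positive widths and heights admit a representation realizing `G`. -/
theorem cycleUnion_realizable (n : ℕ) (w h : Fin n → ℝ)
    (hw : ∀ i, 0 < w i) (hh : ∀ i, 0 < h i)
    (G : SimpleGraph (Fin n)) (hG : IsDisjointUnionOfCycles G) :
    ∃ pos : Fin n → ℝ × ℝ, IsRepresentation w h pos ∧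
      ∀ i j, G.Adj i j →
        Touches (pBox (pos i) (w i) (h i)) (pBox (pos j) (w j) (h j)) := by
  obtain ⟨σ, -, hadj⟩ := hG
  obtain ⟨rep, idx, hidx, hlt, hrep⟩ := exists_orbit_enumeration σ
  choose P hdisj htouch hclose using fun r : Fin n =>
    exists_cycle_layout (Function.minimalPeriod σ r) (fun l => w (σ^[l] r))
      (fun l => h (σ^[l] r)) (fun _ => hw _) (fun _ => hh _)
  -- `Q i` is the position of box `i` inside the layout of its own orbit.
  set Q : Fin n → ℝ × ℝ := fun i => P (rep i) (idx i) with hQ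
  obtain ⟨M, hM⟩ : ∃ M : ℝ, ∀ i, |(Q i).1| + w i ≤ M := by
    obtain ⟨M, hM⟩ := (Set.finite_range fun i => |(Q i).1| + w i).bddAbove
    exact ⟨M, fun i => hM ⟨i, rfl⟩⟩
  -- Layouts lie in the strip `|x| ≤ M`, and distinct orbits are shifted at least `2 * M` apart.
  have hsep : ∀ i j, rep i < rep j →
      (Q i).1 + (rep i : ℕ) * (2 * M) + w i ≤ (Q j).1 + (rep j : ℕ) * (2 * M) := by
    intro i j hij
    have h1 : ((rep i : ℕ) : ℝ) + 1 ≤ (rep j : ℕ) := by exact_mod_cast hij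
    have h2 := hM i
    have h3 := hM j
    have h4 := le_abs_self (Q i).1
    have h5 := neg_abs_le (Q j).1
    have h6 := hw j
    have h7 := abs_nonneg (Q j).1
    have h8 : 0 ≤ 2 * M := by linarith
    have h9 := mul_le_mul_of_nonneg_right h1 h8
    linarith
  have hedge : ∀ i, i ≠ σ i →
      Touches (pBox ((Q i).1 + (rep i : ℕ) * (2 * M), (Q i).2) (w i) (h i))
        (pBox ((Q (σ i)).1 + (rep (σ i) : ℕ) * (2 * M), (Q (σ i)).2) (w (σ i)) (h (σ i))) := by
    intro i hne
    rw [hrep i]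
    apply pBox_translate_touches
    have hs : σ^[idx i + 1] (rep i) = σ i := by
      rw [Function.iterate_succ_apply', hidx]
    have hi := hlt i
    have hj := hlt (σ i)
    have hjx := hidx (σ i)
    rw [hrep] at hj hjx
    rcases Nat.lt_or_ge (idx i + 1) (Function.minimalPeriod σ (rep i)) with hc | hc
    · have e : idx (σ i) = idx i + 1 :=
        Function.iterate_injOn_Iio_minimalPeriod hj hc (hjx.trans hs.symm)
      have := htouch (rep i) (idx i) hc
      simp only [hs, hidx] at this
      simpa only [hQ, hrep, e] using this
    · have hp : Function.minimalPeriod σ (rep i) = idx i + 1 := by omega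
      have hs0 : σ i = rep i := by
        rw [← hs, ← hp, Function.iterate_minimalPeriod]
      have e : idx (σ i) = 0 :=
        Function.iterate_injOn_Iio_minimalPeriod hj (show 0 < _ by omega) (hjx.trans hs0)
      have h2 : 2 ≤ Function.minimalPeriod σ (rep i) := by
        by_contra hcon
        have h0 : idx i = 0 := by omega
        have := hidx i
        rw [h0] at this
        exact hne (this.symm.trans hs0.symm)
      have := hclose (rep i) h2
      rw [show Function.minimalPeriod σ (rep i) - 1 = idx i by omega] at this
      simp only [hidx, Function.iterate_zero, id] at this
      simp only [hQ, hrep, e]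
      rw [hs0]
      exact this
  refine ⟨fun i => ((Q i).1 + (rep i : ℕ) * (2 * M), (Q i).2), ?_, ?_⟩
  · intro i j hij
    rcases lt_trichotomy (rep i) (rep j) with hr | hr | hr
    · exact disjoint_pBoxInt_of_right (hsep i j hr)
    · have hlayout : ∀ i j, rep i = rep j → idx i < idx j →
          Disjoint (pBoxInt (Q i) (w i) (h i)) (pBoxInt (Q j) (w j) (h j)) := by
        intro i j hr hl
        have := hdisj (rep j) (idx i) (idx j) hl (hlt j)
        rw [hidx j, ← hr, hidx i] at this
        simpa only [hQ, hr] using this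
      dsimp only
      rw [hr]
      apply pBoxInt_translate_disjoint
      rcases lt_trichotomy (idx i) (idx j) with hl | hl | hl
      · exact hlayout i j hr hl
      · exact absurd (by rw [← hidx i, ← hidx j, hl, hr]) hij
      · exact (hlayout j i hr.symm hl).symm
    · exact (disjoint_pBoxInt_of_right (hsep j i hr)).symm
  · intro i j hij
    obtain ⟨hne, rfl | rfl⟩ := (hadj i j).mp hij
    · exact hedge i hne
    · exact (hedge j hne.symm).symm
end

section
/- For every n ≥ 1, let B_i be the square box of width and height 2^i for i = 1, …, n. Then in every representation of B_1, …, B_n at most 2n − 2 unordered pairs of boxes touch (for n = 1 read this as: the bound 2n − 2 ≥ 0 contacts holds). -/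
/-!
Call a contact *vertical* if one square lies on top of the other, *horizontal* if they lie side by
side. The theorem follows from the fact that the vertical contacts form a forest
(`stackGraph_isAcyclic`), and likewise, after exchanging the coordinates, the horizontal ones:
a forest on `n ≥ 1` vertices has at most `n - 1` edges.

Suppose the vertical contacts contain a cycle. Going from a square of side `a` to a neighbour of
side `b` changes the height of the centre by `± (a + b) / 2`. Around the cycle these changes sum to
zero, and in that sum the side of each square has coefficient `±1` if the cycle passes through it
upwards or downwards, and `0` if the cycle enters and leaves it on the same side. The sides are
distinct powers of two, so all coefficients vanish (`coeff_eq_zero_of_sum_two_pow`): every square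
of the cycle has its two cycle neighbours on the same side. Take the square of the cycle whose
right edge is leftmost. Its two neighbours are next to each other, so one of them ends where the
other one begins or earlier, hence strictly before the right edge of the chosen square, a
contradiction.
-/

open Set

open scoped Classical in
/-- The number of unordered pairs of boxes that touch in a representation. -/
noncomputable def touchCount {n : ℕ} (w h : Fin n → ℝ) (pos : Fin n → ℝ × ℝ) : ℕ :=
  (Finset.univ.filter fun q : Fin n × Fin n =>
    q.1 < q.2 ∧
      Touches (pBox (pos q.1) (w q.1) (h q.1)) (pBox (pos q.2) (w q.2) (h q.2))).card

/-- `Stacked x y i j`: the square `j`, of side `2 ^ (j + 1)` and bottom-left corner `(x j, y j)`,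
lies on top of the square `i`, with a contact segment of positive length. -/
def Stacked {n : ℕ} (x y : Fin n → ℝ) (i j : Fin n) : Prop :=
  y i + 2 ^ (i.1 + 1) = y j ∧ x i < x j + 2 ^ (j.1 + 1) ∧ x j < x i + 2 ^ (i.1 + 1)

/-- The graph of vertical contacts. Exchanging `x` and `y` gives the horizontal contacts. -/
def stackGraph {n : ℕ} (x y : Fin n → ℝ) : SimpleGraph (Fin n) where
  Adj i j := Stacked x y i j ∨ Stacked x y j i
  symm := ⟨fun _ _ h => h.symm⟩
  loopless := ⟨fun i h => by
    have hp : (0 : ℝ) < 2 ^ (i.1 + 1) := by positivity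
    rcases h with h | h <;> linarith [h.1]⟩

/-- The squares `i` and `j` are separated by a vertical or a horizontal line. -/
def Separated {n : ℕ} (x y : Fin n → ℝ) (i j : Fin n) : Prop :=
  x i + 2 ^ (i.1 + 1) ≤ x j ∨ x j + 2 ^ (j.1 + 1) ≤ x i ∨
    y i + 2 ^ (i.1 + 1) ≤ y j ∨ y j + 2 ^ (j.1 + 1) ≤ y i

/-- A vanishing combination of distinct powers of two with coefficients in `{-2, 0, 2}` is trivial:
the smallest power with non-zero coefficient is not divisible by four times itself. -/
lemma coeff_eq_zero_of_sum_two_pow {ι : Type*} [Fintype ι] (g : ι → ℕ)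
    (hg : Function.Injective g) (c : ι → ℤ) (hc : ∀ i, c i = 0 ∨ c i = 2 ∨ c i = -2)
    (hsum : ∑ i, c i * 2 ^ g i = 0) (i : ι) : c i = 0 := by
  classical
  by_contra hi
  obtain ⟨m, hm, hmin⟩ := Finset.exists_min_image (Finset.univ.filter fun i => c i ≠ 0) g
    ⟨i, by simpa using hi⟩
  simp only [Finset.mem_filter, Finset.mem_univ, true_and] at hm hmin
  rw [← Finset.add_sum_erase _ _ (Finset.mem_univ m)] at hsum
  have hd : (2 : ℤ) ^ (g m + 2) ∣ ∑ i ∈ Finset.univ.erase m, c i * 2 ^ g i := by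
    refine Finset.dvd_sum fun j hj => ?_
    by_cases hj0 : c j = 0
    · simp [hj0]
    have hlt : g m + 1 ≤ g j :=
      lt_of_le_of_ne (hmin j hj0) fun h => (Finset.ne_of_mem_erase hj) (hg h.symm)
    have h2 : (2 : ℤ) ∣ c j := by rcases hc j with h | h | h <;> simp [h]
    have := mul_dvd_mul h2 (pow_dvd_pow (2 : ℤ) hlt)
    rwa [← pow_succ'] at this
  have hd' : (2 : ℤ) ^ g m * 4 ∣ 2 ^ g m * c m := by
    have : (2 : ℤ) ^ g m * c m = -∑ i ∈ Finset.univ.erase m, c i * 2 ^ g i := by linarith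
    rw [this, dvd_neg]
    simpa [pow_add] using hd
  have := (mul_dvd_mul_iff_left (by positivity : (2 : ℤ) ^ g m ≠ 0)).1 hd'
  rcases hc m with h | h | h
  · exact hm h
  all_goals rw [h] at this; norm_num at this

/-- Two distinct neighbours of `v` on the same side of `v` are next to each other, so one of them
has its right edge strictly to the left of the right edge of `v`. -/
lemma exists_right_lt {n : ℕ} {x y : Fin n → ℝ} {u v w : Fin n} (hsep : Separated x y u w)
    (h : Stacked x y u v ∧ Stacked x y w v ∨ Stacked x y v u ∧ Stacked x y v w) :
    x u + 2 ^ (u.1 + 1) < x v + 2 ^ (v.1 + 1) ∨ x w + 2 ^ (w.1 + 1) < x v + 2 ^ (v.1 + 1) := by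
  have hu : (0 : ℝ) < 2 ^ (u.1 + 1) := by positivity
  have hw : (0 : ℝ) < 2 ^ (w.1 + 1) := by positivity
  unfold Stacked at h
  rcases h with ⟨⟨a1, a2, a3⟩, b1, b2, b3⟩ | ⟨⟨a1, a2, a3⟩, b1, b2, b3⟩ <;>
    rcases hsep with h | h | h | h <;>
    first
      | (left; linarith)
      | (right; linarith)

/-- The vertical contacts contain no closed cyclic sequence of at least three distinct squares. -/
lemma no_stack_cycle {n k : ℕ} {x y : Fin n → ℝ}
    (hsep : ∀ i j, i ≠ j → Separated x y i j) (f : Fin (k + 3) → Fin n)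
    (hf : Function.Injective f)
    (hadj : ∀ i, Stacked x y (f i) (f (i + 1)) ∨ Stacked x y (f (i + 1)) (f i)) : False := by
  classical
  -- `s i` records whether the `i`-th step of the cycle goes up or down
  let s : Fin (k + 3) → ℤ := fun i => if Stacked x y (f i) (f (i + 1)) then 1 else -1
  have hs1 : ∀ i, s i = 1 ∨ s i = -1 := fun i => by
    by_cases h : Stacked x y (f i) (f (i + 1)) <;> simp [s, h]
  have hup : ∀ i, s i = 1 → Stacked x y (f i) (f (i + 1)) := fun i h => by
    by_contra h'
    simp [s, h'] at h
  have hdown : ∀ i, s i = -1 → Stacked x y (f (i + 1)) (f i) := fun i h => by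
    refine (hadj i).resolve_left fun h' => ?_
    simp [s, h'] at h
  have hshift : ∀ F : Fin (k + 3) → ℝ, ∑ i, F (i + 1) = ∑ i, F i := fun F =>
    Equiv.sum_comp (Equiv.addRight (1 : Fin (k + 3))) F
  -- twice the change of height of the centre in one step
  have hstep : ∀ i, (s i : ℝ) * (2 ^ ((f i).1 + 1) + 2 ^ ((f (i + 1)).1 + 1)) =
      (2 * y (f (i + 1)) + 2 ^ ((f (i + 1)).1 + 1)) - (2 * y (f i) + 2 ^ ((f i).1 + 1)) := by
    intro i
    rcases hs1 i with h | h
    · have := (hup i h).1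
      rw [h]; push_cast; linarith
    · have := (hdown i h).1
      rw [h]; push_cast; linarith
  have hsum : ∑ i, ((s i : ℝ) + s (i + 1)) * 2 ^ ((f (i + 1)).1 + 1) = 0 := by
    have h0 : ∑ i, (s i : ℝ) * (2 ^ ((f i).1 + 1) + 2 ^ ((f (i + 1)).1 + 1)) = 0 := by
      rw [Finset.sum_congr rfl fun i _ => hstep i, Finset.sum_sub_distrib,
        hshift (fun i => 2 * y (f i) + 2 ^ ((f i).1 + 1)), sub_self]
    have h1 := hshift (fun i => (s i : ℝ) * 2 ^ ((f i).1 + 1))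
    simp only [mul_add, add_mul, Finset.sum_add_distrib] at h0 h1 ⊢
    linarith
  have hsumZ : ∑ i, (s i + s (i + 1)) * 2 ^ ((f (i + 1)).1 + 1) = 0 := by exact_mod_cast hsum
  have halt := coeff_eq_zero_of_sum_two_pow (fun i => (f (i + 1)).1 + 1)
    (fun i j h => add_right_cancel (hf (Fin.ext (Nat.succ_injective h))))
    (fun i => s i + s (i + 1))
    (fun i => by rcases hs1 i with h | h <;> rcases hs1 (i + 1) with h' | h' <;> simp [h, h'])
    hsumZ
  obtain ⟨m, hm⟩ := Finite.exists_min fun i => x (f i) + (2 : ℝ) ^ ((f i).1 + 1)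
  -- the neighbours of the minimal square `m` on the cycle are `m - 1` and `m + 1`
  have hne : f (m - 1) ≠ f (m + 1) := fun h => by
    have h2 : (1 : Fin (k + 3)) + 1 = 0 := by
      have := hf h
      rw [sub_eq_iff_eq_add, add_assoc] at this
      simpa using this.symm
    have := congrArg Fin.val h2
    simp only [Fin.val_add, Fin.val_one, Fin.val_zero] at this
    rw [Nat.mod_eq_of_lt (by omega)] at this
    omega
  have ha := halt (m - 1)
  have hu := hup (m - 1)
  have hd := hdown (m - 1)
  simp only [sub_add_cancel] at ha hu hd
  have hside : Stacked x y (f (m - 1)) (f m) ∧ Stacked x y (f (m + 1)) (f m) ∨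
      Stacked x y (f m) (f (m - 1)) ∧ Stacked x y (f m) (f (m + 1)) := by
    rcases hs1 (m - 1) with h | h
    · exact Or.inl ⟨hu h, hdown m (by omega)⟩
    · exact Or.inr ⟨hd h, hup m (by omega)⟩
  rcases exists_right_lt (hsep _ _ hne) hside with h | h
  · exact absurd (hm (m - 1)) (not_le.2 h)
  · exact absurd (hm (m + 1)) (not_le.2 h)

lemma stackGraph_isAcyclic {n : ℕ} {x y : Fin n → ℝ}
    (hsep : ∀ i j, i ≠ j → Separated x y i j) : (stackGraph x y).IsAcyclic := by
  rw [SimpleGraph.isAcyclic_iff_free_cycleGraph]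
  rintro k hk ⟨φ⟩
  obtain ⟨k, rfl⟩ := Nat.exists_eq_add_of_le' hk
  refine no_stack_cycle hsep φ φ.injective fun i => ?_
  refine φ.toHom.map_adj ?_
  rw [SimpleGraph.cycleGraph_adj]
  simp

lemma card_edgeFinset_add_one_le_of_isAcyclic {V : Type*} [Fintype V] [Nonempty V]
    {G : SimpleGraph V} [Fintype G.edgeSet] (hG : G.IsAcyclic) :
    G.edgeFinset.card + 1 ≤ Fintype.card V := by
  classical
  obtain ⟨T, hT, hmax⟩ :=
    SimpleGraph.exists_maximal_isAcyclic_of_le_isAcyclic (le_top : G ≤ ⊤) hG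
  have hTree : T.IsTree := SimpleGraph.maximal_isAcyclic_iff_isTree.1
    ⟨hmax.prop.2, fun H hH hle => hmax.le_of_ge ⟨le_top, hH⟩ hle⟩
  rw [← hTree.card_edgeFinset]
  exact Nat.succ_le_succ (Finset.card_le_card (SimpleGraph.edgeFinset_mono hT))

lemma separated_of_disjoint {n : ℕ} {pos : Fin n → ℝ × ℝ} {i j : Fin n}
    (h : Disjoint (pBoxInt (pos i) (2 ^ (i.1 + 1)) (2 ^ (i.1 + 1)))
      (pBoxInt (pos j) (2 ^ (j.1 + 1)) (2 ^ (j.1 + 1)))) :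
    Separated (fun i => (pos i).1) (fun i => (pos i).2) i j := by
  have hi : (0 : ℝ) < 2 ^ (i.1 + 1) := by positivity
  have hj : (0 : ℝ) < 2 ^ (j.1 + 1) := by positivity
  by_contra hn
  simp only [Separated, not_or, not_le] at hn
  obtain ⟨h1, h2, h3, h4⟩ := hn
  obtain ⟨a, ha⟩ := exists_between (show max (pos i).1 (pos j).1 <
    min ((pos i).1 + 2 ^ (i.1 + 1)) ((pos j).1 + 2 ^ (j.1 + 1)) by
      simp only [max_lt_iff, lt_min_iff]; refine ⟨⟨?_, ?_⟩, ?_, ?_⟩ <;> linarith)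
  obtain ⟨b, hb⟩ := exists_between (show max (pos i).2 (pos j).2 <
    min ((pos i).2 + 2 ^ (i.1 + 1)) ((pos j).2 + 2 ^ (j.1 + 1)) by
      simp only [max_lt_iff, lt_min_iff]; refine ⟨⟨?_, ?_⟩, ?_, ?_⟩ <;> linarith)
  simp only [max_lt_iff, lt_min_iff] at ha hb
  refine (Set.disjoint_left.1 h : ∀ ⦃p⦄, _) (show (a, b) ∈ _ from ?_) ?_ <;> simp [pBoxInt] <;> tauto

/-- Separated squares that touch have a vertical or a horizontal contact: the two endpoints of the
contact segment agree in the coordinate of the separating line, so they differ in the other one,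
where they witness an overlap of positive length. -/
lemma adj_of_touches {n : ℕ} {pos : Fin n → ℝ × ℝ} {i j : Fin n}
    (hsep : Separated (fun i => (pos i).1) (fun i => (pos i).2) i j)
    (h : Touches (pBox (pos i) (2 ^ (i.1 + 1)) (2 ^ (i.1 + 1)))
      (pBox (pos j) (2 ^ (j.1 + 1)) (2 ^ (j.1 + 1)))) :
    (stackGraph (fun i => (pos i).1) (fun i => (pos i).2)).Adj i j ∨
      (stackGraph (fun i => (pos i).2) (fun i => (pos i).1)).Adj i j := by
  obtain ⟨p, q, hpq, hseg⟩ := h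
  have hp := hseg.symm.subset (left_mem_segment ℝ p q)
  have hq := hseg.symm.subset (right_mem_segment ℝ p q)
  simp only [pBox, Set.mem_inter_iff, Set.mem_prod, Set.mem_Icc] at hp hq
  obtain ⟨⟨⟨p1, p2⟩, p3, p4⟩, ⟨p5, p6⟩, p7, p8⟩ := hp
  obtain ⟨⟨⟨q1, q2⟩, q3, q4⟩, ⟨q5, q6⟩, q7, q8⟩ := hq
  have hx : p.1 = q.1 → p.2 < q.2 ∨ q.2 < p.2 := fun h =>
    lt_or_gt_of_ne fun h' => hpq (Prod.ext h h')
  have hy : p.2 = q.2 → p.1 < q.1 ∨ q.1 < p.1 := fun h =>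
    lt_or_gt_of_ne fun h' => hpq (Prod.ext h' h)
  simp only [stackGraph, Stacked]
  simp only [Separated] at hsep
  rcases hsep with h | h | h | h
  · right; left
    rcases hx (by linarith) with h' | h' <;> refine ⟨?_, ?_, ?_⟩ <;> linarith
  · right; right
    rcases hx (by linarith) with h' | h' <;> refine ⟨?_, ?_, ?_⟩ <;> linarith
  · left; left
    rcases hy (by linarith) with h' | h' <;> refine ⟨?_, ?_, ?_⟩ <;> linarith
  · left; right
    rcases hy (by linarith) with h' | h' <;> refine ⟨?_, ?_, ?_⟩ <;> linarith

/-- For the squares of side lengths `2^1, …, 2^n` (`n ≥ 1`), every representation has at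
most `2n - 2` touching unordered pairs of boxes. -/
theorem powers_of_two_upper_bound (n : ℕ) (hn : 1 ≤ n)
    (pos : Fin n → ℝ × ℝ)
    (hrep : IsRepresentation (fun i : Fin n => (2 : ℝ) ^ (i.1 + 1))
      (fun i : Fin n => (2 : ℝ) ^ (i.1 + 1)) pos) :
    touchCount (fun i : Fin n => (2 : ℝ) ^ (i.1 + 1))
      (fun i : Fin n => (2 : ℝ) ^ (i.1 + 1)) pos ≤ 2 * n - 2 := by
  classical
  have : Nonempty (Fin n) := ⟨⟨0, hn⟩⟩
  have hsep : ∀ i j, i ≠ j → Separated (fun i => (pos i).1) (fun i => (pos i).2) i j :=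
    fun i j hij => separated_of_disjoint (hrep hij)
  have hsep' : ∀ i j, i ≠ j → Separated (fun i => (pos i).2) (fun i => (pos i).1) i j :=
    fun i j hij => by
      have := hsep i j hij
      unfold Separated at this ⊢
      tauto
  have hV := card_edgeFinset_add_one_le_of_isAcyclic (stackGraph_isAcyclic hsep)
  have hH := card_edgeFinset_add_one_le_of_isAcyclic (stackGraph_isAcyclic hsep')
  rw [Fintype.card_fin] at hV hH
  set V := stackGraph (fun i => (pos i).1) (fun i => (pos i).2)
  set H := stackGraph (fun i => (pos i).2) (fun i => (pos i).1)
  have hcard : touchCount (fun i : Fin n => (2 : ℝ) ^ (i.1 + 1))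
      (fun i : Fin n => (2 : ℝ) ^ (i.1 + 1)) pos ≤ (V.edgeFinset ∪ H.edgeFinset).card := by
    unfold touchCount
    refine Finset.card_le_card_of_injOn (fun q => s(q.1, q.2)) ?_ ?_
    · intro q hq
      simp only [Finset.coe_filter, Finset.mem_univ, true_and, Set.mem_ofPred_eq] at hq
      simpa using adj_of_touches (hsep _ _ hq.1.ne) hq.2
    · rintro ⟨a, b⟩ hq ⟨c, d⟩ hq' h
      simp only [Finset.coe_filter, Finset.mem_univ, true_and, Set.mem_ofPred_eq] at hq hq'
      rcases Sym2.eq_iff.1 h with ⟨h1, h2⟩ | ⟨h1, h2⟩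
      · exact Prod.ext h1 h2
      · dsimp only at h1 h2 hq hq'
        subst h1 h2
        exact absurd hq.1 (not_lt.2 hq'.1.le)
  have := hcard.trans (Finset.card_union_le _ _)
  omega
end

section
/- Let B_0 be a box of width w_0 > 0 and height h_0 > 0, and let B_1, …, B_n be boxes with widths w_i > 0 and heights h_i > 0. Suppose {1, …, n} is partitioned into four (possibly empty) sets T, Bo, L, R such that Σ_{i∈T} w_i ≤ w_0, Σ_{i∈Bo} w_i ≤ w_0, Σ_{i∈L} h_i ≤ h_0, and Σ_{i∈R} h_i ≤ h_0. Then there exists a representation of B_0, B_1, …, B_n in which every box B_i with 1 ≤ i ≤ n touches B_0 (those in T along the top side of B_0, those in Bo along the bottom side, those in L along the left side, and those in R along the right side). -/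
/-!
Put `B₀` at the origin. The boxes assigned to one side are lined up along it in index order,
starting at the bottom-left end of that side: box `i` starts at the total length `stackOffset S f i`
of its predecessors. Since the total length is at most that of the side, every box lies within
the range of its side (`stackOffset_add_le`), so it meets `B₀` in a segment of its full side length
(`inter_eq_horizontal`, `inter_eq_vertical`). Two boxes on one side are separated by the offsets
(`stackOffset_separated`). Two boxes on different sides are separated by a line carrying one of
the sides of `B₀`: the top and bottom boxes stay in the vertical strip over `[0, w₀]`, the left and
right ones stay outside of it.
-/

open Set

/-- The total length of the members of `S` preceding `i`: where box `i` starts when the boxes of `S`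
are lined up in index order. -/
noncomputable def stackOffset {n : ℕ} (S : Finset (Fin n)) (f : Fin n → ℝ) (i : Fin n) : ℝ :=
  ∑ j ∈ S with j < i, f j

lemma stackOffset_nonneg {n : ℕ} (S : Finset (Fin n)) {f : Fin n → ℝ} (hf : ∀ i, 0 < f i)
    (i : Fin n) : 0 ≤ stackOffset S f i :=
  Finset.sum_nonneg fun j _ => (hf j).le

lemma stackOffset_add_eq {n : ℕ} (S : Finset (Fin n)) (f : Fin n → ℝ) (i : Fin n) :
    stackOffset S f i + f i = ∑ j ∈ insert i {j ∈ S | j < i}, f j := by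
  rw [Finset.sum_insert (by simp), add_comm, stackOffset]

lemma stackOffset_add_le {n : ℕ} {S : Finset (Fin n)} {f : Fin n → ℝ} (hf : ∀ i, 0 < f i)
    {i : Fin n} (hi : i ∈ S) : stackOffset S f i + f i ≤ ∑ j ∈ S, f j := by
  rw [stackOffset_add_eq]
  refine Finset.sum_le_sum_of_subset_of_nonneg ?_ fun j _ _ => (hf j).le
  grind

lemma stackOffset_separated {n : ℕ} {S : Finset (Fin n)} {f : Fin n → ℝ} (hf : ∀ i, 0 < f i)
    {i j : Fin n} (hi : i ∈ S) (hij : i < j) :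
    stackOffset S f i + f i ≤ stackOffset S f j := by
  rw [stackOffset_add_eq, stackOffset]
  refine Finset.sum_le_sum_of_subset_of_nonneg ?_ fun j _ _ => (hf j).le
  grind

lemma stackOffset_separated_of_ne {n : ℕ} {S : Finset (Fin n)} {f : Fin n → ℝ}
    (hf : ∀ i, 0 < f i) {i j : Fin n} (hi : i ∈ S) (hj : j ∈ S) (hij : i ≠ j) :
    stackOffset S f i + f i ≤ stackOffset S f j ∨ stackOffset S f j + f j ≤ stackOffset S f i :=
  hij.lt_or_gt.imp (stackOffset_separated hf hi) (stackOffset_separated hf hj)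

lemma disjoint_pBoxInt {p q : ℝ × ℝ} {a b c d : ℝ}
    (H : (p.1 + a ≤ q.1 ∨ q.1 + c ≤ p.1) ∨ (p.2 + b ≤ q.2 ∨ q.2 + d ≤ p.2)) :
    Disjoint (pBoxInt p a b) (pBoxInt q c d) := by
  rw [Set.disjoint_left]
  rintro ⟨x, y⟩ ⟨⟨h1, h2⟩, h3, h4⟩ ⟨⟨h5, h6⟩, h7, h8⟩
  dsimp only at *
  rcases H with (H | H) | (H | H) <;> linarith

/-- A box directly above or directly below `B₀`, within its horizontal range, meets `B₀` in its
full horizontal side, at height `c`. -/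
lemma inter_eq_horizontal {w₀ h₀ x y a b c : ℝ} (hh₀ : 0 < h₀) (ha : 0 < a) (hb : 0 < b)
    (hx : 0 ≤ x) (hxa : x + a ≤ w₀) (hc : (y = h₀ ∧ c = h₀) ∨ (y = -b ∧ c = 0)) :
    pBox (0, 0) w₀ h₀ ∩ pBox (x, y) a b = segment ℝ (x, c) (x + a, c) := by
  rw [← Prod.image_mk_segment_left, segment_eq_Icc (by linarith)]
  ext ⟨u, v⟩
  simp only [pBox, mem_inter_iff, mem_prod, mem_Icc, mem_image, Prod.mk.injEq]
  constructor
  · rintro ⟨⟨h1, h2, h3⟩, h4, h5, h6⟩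
    refine ⟨u, h4, rfl, ?_⟩
    rcases hc with ⟨rfl, rfl⟩ | ⟨rfl, rfl⟩ <;> linarith
  · rintro ⟨_, ⟨h1, h2⟩, rfl, rfl⟩
    rcases hc with ⟨rfl, rfl⟩ | ⟨rfl, rfl⟩ <;>
      refine ⟨⟨⟨?_, ?_⟩, ?_, ?_⟩, ⟨?_, ?_⟩, ?_, ?_⟩ <;> linarith

/-- A box directly to the left or right of `B₀`, within its vertical range, meets `B₀` in its
full vertical side, at abscissa `c`. -/
lemma inter_eq_vertical {w₀ h₀ x y a b c : ℝ} (hw₀ : 0 < w₀) (ha : 0 < a) (hb : 0 < b)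
    (hy : 0 ≤ y) (hyb : y + b ≤ h₀) (hc : (x = w₀ ∧ c = w₀) ∨ (x = -a ∧ c = 0)) :
    pBox (0, 0) w₀ h₀ ∩ pBox (x, y) a b = segment ℝ (c, y) (c, y + b) := by
  rw [← Prod.image_mk_segment_right, segment_eq_Icc (by linarith)]
  ext ⟨u, v⟩
  simp only [pBox, mem_inter_iff, mem_prod, mem_Icc, mem_image, Prod.mk.injEq]
  constructor
  · rintro ⟨⟨⟨h1, h2⟩, h3⟩, ⟨h4, h5⟩, h6⟩
    refine ⟨v, h6, ?_, rfl⟩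
    rcases hc with ⟨rfl, rfl⟩ | ⟨rfl, rfl⟩ <;> linarith
  · rintro ⟨_, ⟨h1, h2⟩, rfl, rfl⟩
    rcases hc with ⟨rfl, rfl⟩ | ⟨rfl, rfl⟩ <;>
      refine ⟨⟨⟨?_, ?_⟩, ?_, ?_⟩, ⟨?_, ?_⟩, ?_, ?_⟩ <;> linarith

lemma horizontal_segment_subset (x x' c : ℝ) :
    segment ℝ (x, c) (x', c) ⊆ {q : ℝ × ℝ | q.2 = c} := by
  rw [← Prod.image_mk_segment_left]
  rintro _ ⟨u, -, rfl⟩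
  rfl

lemma vertical_segment_subset (y y' c : ℝ) :
    segment ℝ (c, y) (c, y') ⊆ {q : ℝ × ℝ | q.1 = c} := by
  rw [← Prod.image_mk_segment_right]
  rintro _ ⟨u, -, rfl⟩
  rfl

/-- If `{1, …, n}` is partitioned into sets `T`, `Bo`, `L`, `R` whose widths
(resp. heights) fit along the top, bottom, left and right sides of `B₀`, then all boxes
`B₁, …, Bₙ` can simultaneously touch `B₀` along the corresponding sides. -/
theorem star_placement (n : ℕ) (w₀ h₀ : ℝ) (hw₀ : 0 < w₀) (hh₀ : 0 < h₀)
    (w h : Fin n → ℝ) (hw : ∀ i, 0 < w i) (hh : ∀ i, 0 < h i)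
    (T Bo L R : Finset (Fin n))
    (hdisj : ∀ i : Fin n,
      (i ∈ T ∧ i ∉ Bo ∧ i ∉ L ∧ i ∉ R) ∨ (i ∉ T ∧ i ∈ Bo ∧ i ∉ L ∧ i ∉ R) ∨
      (i ∉ T ∧ i ∉ Bo ∧ i ∈ L ∧ i ∉ R) ∨ (i ∉ T ∧ i ∉ Bo ∧ i ∉ L ∧ i ∈ R))
    (hT : (∑ i ∈ T, w i) ≤ w₀) (hBo : (∑ i ∈ Bo, w i) ≤ w₀)
    (hL : (∑ i ∈ L, h i) ≤ h₀) (hR : (∑ i ∈ R, h i) ≤ h₀) :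
    ∃ (p₀ : ℝ × ℝ) (pos : Fin n → ℝ × ℝ),
      (∀ i : Fin n, Disjoint (pBoxInt p₀ w₀ h₀) (pBoxInt (pos i) (w i) (h i))) ∧
      (Pairwise fun i j =>
        Disjoint (pBoxInt (pos i) (w i) (h i)) (pBoxInt (pos j) (w j) (h j))) ∧
      (∀ i : Fin n,
        Touches (pBox p₀ w₀ h₀) (pBox (pos i) (w i) (h i))) ∧
      (∀ i ∈ T, pBox p₀ w₀ h₀ ∩ pBox (pos i) (w i) (h i) ⊆
        {q : ℝ × ℝ | q.2 = p₀.2 + h₀}) ∧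
      (∀ i ∈ Bo, pBox p₀ w₀ h₀ ∩ pBox (pos i) (w i) (h i) ⊆
        {q : ℝ × ℝ | q.2 = p₀.2}) ∧
      (∀ i ∈ L, pBox p₀ w₀ h₀ ∩ pBox (pos i) (w i) (h i) ⊆
        {q : ℝ × ℝ | q.1 = p₀.1}) ∧
      (∀ i ∈ R, pBox p₀ w₀ h₀ ∩ pBox (pos i) (w i) (h i) ⊆
        {q : ℝ × ℝ | q.1 = p₀.1 + w₀}) := by
  classical
  let pos : Fin n → ℝ × ℝ := fun i =>
    if i ∈ T then (stackOffset T w i, h₀)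
    else if i ∈ Bo then (stackOffset Bo w i, -h i)
    else if i ∈ L then (-w i, stackOffset L h i)
    else (w₀, stackOffset R h i)
  have posT : ∀ i ∈ T, pos i = (stackOffset T w i, h₀) := by grind
  have posB : ∀ i ∈ Bo, pos i = (stackOffset Bo w i, -h i) := by grind
  have posL : ∀ i ∈ L, pos i = (-w i, stackOffset L h i) := by grind
  have posR : ∀ i ∈ R, pos i = (w₀, stackOffset R h i) := by grind
  have cover : ∀ i, i ∈ T ∨ i ∈ Bo ∨ i ∈ L ∨ i ∈ R := by grind
  have leT : ∀ i ∈ T, stackOffset T w i + w i ≤ w₀ :=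
    fun i hi => (stackOffset_add_le hw hi).trans hT
  have leB : ∀ i ∈ Bo, stackOffset Bo w i + w i ≤ w₀ :=
    fun i hi => (stackOffset_add_le hw hi).trans hBo
  have leL : ∀ i ∈ L, stackOffset L h i + h i ≤ h₀ :=
    fun i hi => (stackOffset_add_le hh hi).trans hL
  have leR : ∀ i ∈ R, stackOffset R h i + h i ≤ h₀ :=
    fun i hi => (stackOffset_add_le hh hi).trans hR
  have interT : ∀ i ∈ T, pBox (0, 0) w₀ h₀ ∩ pBox (pos i) (w i) (h i) =
      segment ℝ (stackOffset T w i, h₀) (stackOffset T w i + w i, h₀) := fun i hi => by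
    rw [posT i hi]
    exact inter_eq_horizontal hh₀ (hw i) (hh i) (stackOffset_nonneg T hw i) (leT i hi)
      (Or.inl ⟨rfl, rfl⟩)
  have interB : ∀ i ∈ Bo, pBox (0, 0) w₀ h₀ ∩ pBox (pos i) (w i) (h i) =
      segment ℝ (stackOffset Bo w i, 0) (stackOffset Bo w i + w i, 0) := fun i hi => by
    rw [posB i hi]
    exact inter_eq_horizontal hh₀ (hw i) (hh i) (stackOffset_nonneg Bo hw i) (leB i hi)
      (Or.inr ⟨rfl, rfl⟩)
  have interL : ∀ i ∈ L, pBox (0, 0) w₀ h₀ ∩ pBox (pos i) (w i) (h i) =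
      segment ℝ (0, stackOffset L h i) (0, stackOffset L h i + h i) := fun i hi => by
    rw [posL i hi]
    exact inter_eq_vertical hw₀ (hw i) (hh i) (stackOffset_nonneg L hh i) (leL i hi)
      (Or.inr ⟨rfl, rfl⟩)
  have interR : ∀ i ∈ R, pBox (0, 0) w₀ h₀ ∩ pBox (pos i) (w i) (h i) =
      segment ℝ (w₀, stackOffset R h i) (w₀, stackOffset R h i + h i) := fun i hi => by
    rw [posR i hi]
    exact inter_eq_vertical hw₀ (hw i) (hh i) (stackOffset_nonneg R hh i) (leR i hi)
      (Or.inl ⟨rfl, rfl⟩)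
  refine ⟨(0, 0), pos, fun i => ?_, fun i j hij => ?_, fun i => ?_, fun i hi => ?_, fun i hi => ?_,
    fun i hi => ?_, fun i hi => ?_⟩
  · apply disjoint_pBoxInt
    rcases cover i with hi | hi | hi | hi
    · simp [posT i hi]
    · simp [posB i hi]
    · simp [posL i hi]
    · simp [posR i hi]
  · apply disjoint_pBoxInt
    have nT := stackOffset_nonneg T hw
    have nB := stackOffset_nonneg Bo hw
    rcases cover i with hi | hi | hi | hi <;> rcases cover j with hj | hj | hj | hj
    -- Same side: separated along that side.
    -- Different sides: separated by a line through a side of `B₀`.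
    · simpa only [posT i hi, posT j hj] using Or.inl (stackOffset_separated_of_ne hw hi hj hij)
    · simp [posT i hi, posB j hj, hh₀.le]
    · simp [posT i hi, posL j hj, nT i]
    · simp [posT i hi, posR j hj, leT i hi]
    · simp [posB i hi, posT j hj, hh₀.le]
    · simpa only [posB i hi, posB j hj] using Or.inl (stackOffset_separated_of_ne hw hi hj hij)
    · simp [posB i hi, posL j hj, nB i]
    · simp [posB i hi, posR j hj, leB i hi]
    · simp [posL i hi, posT j hj, nT j]
    · simp [posL i hi, posB j hj, nB j]
    · simpa only [posL i hi, posL j hj] using Or.inr (stackOffset_separated_of_ne hh hi hj hij)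
    · simp [posL i hi, posR j hj, hw₀.le]
    · simp [posR i hi, posT j hj, leT j hj]
    · simp [posR i hi, posB j hj, leB j hj]
    · simp [posR i hi, posL j hj, hw₀.le]
    · simpa only [posR i hi, posR j hj] using Or.inr (stackOffset_separated_of_ne hh hi hj hij)
  · rcases cover i with hi | hi | hi | hi
    · exact ⟨_, _, by simp [(hw i).ne'], interT i hi⟩
    · exact ⟨_, _, by simp [(hw i).ne'], interB i hi⟩
    · exact ⟨_, _, by simp [(hh i).ne'], interL i hi⟩
    · exact ⟨_, _, by simp [(hh i).ne'], interR i hi⟩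
  · rw [interT i hi, zero_add]
    exact horizontal_segment_subset _ _ _
  · rw [interB i hi]
    exact horizontal_segment_subset _ _ _
  · rw [interL i hi]
    exact vertical_segment_subset _ _ _
  · rw [interR i hi, zero_add]
    exact vertical_segment_subset _ _ _
end
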